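/- For every probability distribution P_XY on 𝒳×𝒴, the function θ ↦ H↑_{1+θ}(X|Y), extended at θ=0 by the value H(X|Y), is non-increasing on (−1,∞). -/

import Mathlib

open Real Filter

/-- Marginal distribution on `𝒴`. -/
noncomputable def margY {𝒳 𝒴 : Type*} [Fintype 𝒳] (P : 𝒳 × 𝒴 → ℝ) (y : 𝒴) : ℝ :=
  ∑ x : 𝒳, P (x, y)

/-- Upper conditional Rényi entropy `H↑_{1+θ}(X|Y)`. -/
noncomputable def condRenyiUp {𝒳 𝒴 : Type*} [Fintype 𝒳] [Fintype 𝒴]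
    (P : 𝒳 × 𝒴 → ℝ) (θ : ℝ) : ℝ :=
  -((1 + θ) / θ) * Real.log (∑ y : 𝒴, (∑ x : 𝒳, P (x, y) ^ (1 + θ)) ^ (1 / (1 + θ)))

/-- Conditional entropy `H(X|Y)`. -/
noncomputable def condEnt {𝒳 𝒴 : Type*} [Fintype 𝒳] [Fintype 𝒴]
    (P : 𝒳 × 𝒴 → ℝ) : ℝ :=
  -∑ x : 𝒳, ∑ y : 𝒴,
    if 0 < P (x, y) then P (x, y) * Real.log (P (x, y) / margY P y) else 0


/-- Hölder's inequality in weighted form. -/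
lemma holder_weights {ι : Type*} [Fintype ι] (u v : ι → ℝ) (hu : ∀ i, 0 ≤ u i)
    (hv : ∀ i, 0 ≤ v i) (a b : ℝ) (ha : 0 < a) (hb : 0 < b) (hab : a + b = 1) :
    ∑ i, u i ^ a * v i ^ b ≤ (∑ i, u i) ^ a * (∑ i, v i) ^ b := by
  have hpq : (1 / a).HolderConjugate (1 / b) := by
    rw [Real.holderConjugate_iff]
    refine ⟨?_, by simpa using hab⟩
    rw [lt_div_iff₀ ha]; linarith
  have h := Real.inner_le_Lp_mul_Lq_of_nonneg Finset.univ hpq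
    (f := fun i => u i ^ a) (g := fun i => v i ^ b)
    (fun i _ => rpow_nonneg (hu i) _) (fun i _ => rpow_nonneg (hv i) _)
  have e1 : ∀ i, (u i ^ a) ^ (1 / a) = u i := fun i => by
    rw [← rpow_mul (hu i), mul_one_div_cancel ha.ne', rpow_one]
  have e2 : ∀ i, (v i ^ b) ^ (1 / b) = v i := fun i => by
    rw [← rpow_mul (hv i), mul_one_div_cancel hb.ne', rpow_one]
  simpa only [e1, e2, one_div_one_div] using h

/-- Interpolation of norms between order `α` and order `1`. -/
lemma norm_interp {ι : Type*} [Fintype ι] (f : ι → ℝ) (hf : ∀ i, 0 ≤ f i)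
    (α β l : ℝ) (hα : 0 < α) (hβ : 0 < β) (hl0 : 0 < l) (hl1 : l < 1)
    (h : 1 / β = l / α + (1 - l)) :
    (∑ i, f i ^ β) ^ (1 / β) ≤ ((∑ i, f i ^ α) ^ (1 / α)) ^ l * (∑ i, f i) ^ (1 - l) := by
  have hS : ∀ r : ℝ, 0 ≤ ∑ i, f i ^ r := fun r =>
    Finset.sum_nonneg fun i _ => rpow_nonneg (hf i) _
  have hS1 : 0 ≤ ∑ i, f i := Finset.sum_nonneg fun i _ => hf i
  have ha : 0 < l * β / α := by positivity
  have hb : 0 < (1 - l) * β := mul_pos (by linarith) hβ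
  have hab : l * β / α + (1 - l) * β = 1 := by
    have : (l / α + (1 - l)) * β = 1 := by rw [← h]; field_simp
    linear_combination this
  have h1 := holder_weights (fun i => f i ^ α) f (fun i => rpow_nonneg (hf i) _) hf _ _ ha hb hab
  have e : ∀ i, (f i ^ α) ^ (l * β / α) * f i ^ ((1 - l) * β) = f i ^ β := fun i => by
    have e1 : α * (l * β / α) = l * β := by field_simp
    rw [← rpow_mul (hf i), e1, ← rpow_add_of_nonneg (hf i) (by positivity) hb.le]
    congr 1; ring
  simp only [e] at h1
  have h2 := rpow_le_rpow (hS β) h1 (by positivity : 0 ≤ 1 / β)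
  refine h2.trans_eq ?_
  rw [mul_rpow (rpow_nonneg (hS α) _) (rpow_nonneg hS1 _), ← rpow_mul (hS α),
    ← rpow_mul (hS α), ← rpow_mul hS1]
  congr 2 <;> field_simp

/-- The sum over `y` of the norms of order `α`. -/
noncomputable def sumNorm {𝒳 𝒴 : Type*} [Fintype 𝒳] [Fintype 𝒴]
    (P : 𝒳 × 𝒴 → ℝ) (α : ℝ) : ℝ :=
  ∑ y : 𝒴, (∑ x : 𝒳, P (x, y) ^ α) ^ (1 / α)

lemma sumNorm_interp {𝒳 𝒴 : Type*} [Fintype 𝒳] [Fintype 𝒴]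
    (P : 𝒳 × 𝒴 → ℝ) (hP0 : ∀ p, 0 ≤ P p) (hM : ∑ y, margY P y = 1)
    (α β l : ℝ) (hα : 0 < α) (hβ : 0 < β) (hl0 : 0 < l) (hl1 : l < 1)
    (h : 1 / β = l / α + (1 - l)) :
    sumNorm P β ≤ sumNorm P α ^ l := by
  have h1 := holder_weights (fun y => (∑ x : 𝒳, P (x, y) ^ α) ^ (1 / α)) (margY P)
    (fun y => rpow_nonneg (Finset.sum_nonneg fun x _ => rpow_nonneg (hP0 _) _) _)
    (fun y => Finset.sum_nonneg fun x _ => hP0 _) l (1 - l) hl0 (by linarith) (by ring)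
  rw [hM, one_rpow, mul_one] at h1
  refine le_trans (Finset.sum_le_sum fun y _ => ?_) h1
  exact norm_interp (fun x => P (x, y)) (fun x => hP0 _) α β l hα hβ hl0 hl1 h

lemma exp_le_sumNorm {𝒳 𝒴 : Type*} [Fintype 𝒳] [Fintype 𝒴]
    (P : 𝒳 × 𝒴 → ℝ) (hP0 : ∀ p, 0 ≤ P p) (hM : ∑ y, margY P y = 1)
    (θ : ℝ) (hθ : 0 < 1 + θ) :
    exp (-(θ / (1 + θ) * condEnt P)) ≤ sumNorm P (1 + θ) := by
  have hM0 : ∀ y, 0 ≤ margY P y := fun y => Finset.sum_nonneg fun x _ => hP0 _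
  set A : 𝒴 → ℝ := fun y => ∑ x, P (x, y) / margY P y * log (P (x, y) / margY P y) with hA
  have hE : -condEnt P = ∑ y, margY P y * A y := by
    unfold condEnt
    rw [neg_neg, Finset.sum_comm]
    refine Finset.sum_congr rfl fun y _ => ?_
    rw [hA, Finset.mul_sum]
    refine Finset.sum_congr rfl fun x _ => ?_
    split_ifs with hp
    · have : 0 < margY P y :=
        hp.trans_le (Finset.single_le_sum (f := fun x => P (x, y)) (fun x _ => hP0 _)
          (Finset.mem_univ x))
      field_simp
    · have : P (x, y) = 0 := le_antisymm (not_lt.mp hp) (hP0 _)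
      simp [this]
  have hJ := convexOn_exp.map_sum_le (t := Finset.univ) (w := margY P)
    (p := fun y => θ / (1 + θ) * A y) (fun y _ => hM0 y) hM (fun _ _ => Set.mem_univ _)
  simp only [smul_eq_mul] at hJ
  have e : -(θ / (1 + θ) * condEnt P) = ∑ y, margY P y * (θ / (1 + θ) * A y) := by
    rw [← mul_neg, hE, Finset.mul_sum]
    exact Finset.sum_congr rfl fun y _ => by ring
  rw [e]
  refine hJ.trans (Finset.sum_le_sum fun y _ => ?_)
  rcases (hM0 y).eq_or_lt with h0 | hpos
  · rw [← h0, zero_mul]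
    exact rpow_nonneg (Finset.sum_nonneg fun x _ => rpow_nonneg (hP0 _) _) _
  · have hw : ∀ x, 0 ≤ P (x, y) / margY P y := fun x => div_nonneg (hP0 _) hpos.le
    have hw1 : ∑ x, P (x, y) / margY P y = 1 := by
      rw [← Finset.sum_div]; exact div_self hpos.ne'
    have hJ2 := convexOn_exp.map_sum_le (t := Finset.univ) (w := fun x => P (x, y) / margY P y)
      (p := fun x => θ * log (P (x, y) / margY P y)) (fun x _ => hw x) hw1
      (fun _ _ => Set.mem_univ _)
    simp only [smul_eq_mul] at hJ2
    have e1 : ∑ x, P (x, y) / margY P y * (θ * log (P (x, y) / margY P y)) = θ * A y := by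
      rw [hA, Finset.mul_sum]
      exact Finset.sum_congr rfl fun x _ => by ring
    have e2 : ∀ x, P (x, y) / margY P y * exp (θ * log (P (x, y) / margY P y))
        = P (x, y) ^ (1 + θ) / margY P y ^ (1 + θ) := fun x => by
      rw [← div_rpow (hP0 _) hpos.le]
      rcases (hw x).eq_or_lt with h | h
      · rw [← h, zero_mul, zero_rpow hθ.ne']
      · rw [rpow_add h, rpow_one, rpow_def_of_pos h, mul_comm θ]
    rw [e1] at hJ2
    simp only [e2] at hJ2
    rw [← Finset.sum_div] at hJ2
    have h3 := rpow_le_rpow (exp_pos _).le hJ2 (by positivity : 0 ≤ 1 / (1 + θ))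
    rw [← exp_mul, div_rpow (Finset.sum_nonneg fun x _ => rpow_nonneg (hP0 _) _)
      (rpow_nonneg hpos.le _), ← rpow_mul hpos.le, mul_one_div_cancel hθ.ne', rpow_one,
      le_div_iff₀ hpos] at h3
    refine le_trans (le_of_eq ?_) h3
    rw [mul_comm]
    congr 2; ring

theorem condRenyiUp_antitone {𝒳 𝒴 : Type*} [Fintype 𝒳] [Fintype 𝒴]
    (P : 𝒳 × 𝒴 → ℝ) (hP0 : ∀ p, 0 ≤ P p) (hP1 : ∑ p : 𝒳 × 𝒴, P p = 1) :
    AntitoneOn (fun θ : ℝ => if θ = 0 then condEnt P else condRenyiUp P θ)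
      (Set.Ioi (-1 : ℝ)) := by
  have hM : ∑ y, margY P y = 1 := by
    rw [← hP1, Fintype.sum_prod_type_right]; rfl
  have hpos : ∀ θ : ℝ, 0 < 1 + θ → 0 < sumNorm P (1 + θ) := fun θ h =>
    (exp_pos _).trans_le (exp_le_sumNorm P hP0 hM θ h)
  have hR : ∀ θ : ℝ, condRenyiUp P θ = -((1 + θ) / θ) * log (sumNorm P (1 + θ)) := fun _ => rfl
  have hlog : ∀ θ : ℝ, 0 < 1 + θ → -(θ / (1 + θ) * condEnt P) ≤ log (sumNorm P (1 + θ)) :=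
    fun θ h => (le_log_iff_exp_le (hpos θ h)).2 (exp_le_sumNorm P hP0 hM θ h)
  -- comparison with the conditional entropy
  have hgt : ∀ θ : ℝ, 0 < θ → condRenyiUp P θ ≤ condEnt P := fun θ h => by
    have h1 : 0 < 1 + θ := by linarith
    have := mul_le_mul_of_nonneg_left (hlog θ h1) (by positivity : 0 ≤ (1 + θ) / θ)
    have e : (1 + θ) / θ * -(θ / (1 + θ) * condEnt P) = -condEnt P := by field_simp
    rw [hR]; linarith
  have hlt : ∀ θ : ℝ, 0 < 1 + θ → θ < 0 → condEnt P ≤ condRenyiUp P θ := fun θ h1 h => by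
    have := mul_le_mul_of_nonneg_left (hlog θ h1)
      (neg_nonneg.2 (div_nonpos_of_nonneg_of_nonpos h1.le h.le))
    have h0 := h.ne
    have e : -((1 + θ) / θ) * -(θ / (1 + θ) * condEnt P) = condEnt P := by field_simp
    rw [hR]; linarith
  -- interpolation
  have hInterp : ∀ a b l : ℝ, 0 < 1 + a → 0 < 1 + b → 0 < l → l < 1 →
      b / (1 + b) = l * (a / (1 + a)) →
      log (sumNorm P (1 + b)) ≤ l * log (sumNorm P (1 + a)) := by
    intro a b l ha hb hl0 hl1 h
    rw [← log_rpow (hpos a ha)]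
    refine log_le_log (hpos b hb) (sumNorm_interp P hP0 hM _ _ l ha hb hl0 hl1 ?_)
    have e1 : 1 / (1 + b) = 1 - b / (1 + b) := by field_simp; ring
    have e2 : a / (1 + a) = 1 - 1 / (1 + a) := by field_simp; ring
    rw [e1, h, e2]; ring
  intro a ha b hb hab
  have ha1 : 0 < 1 + a := by have := Set.mem_Ioi.1 ha; linarith
  have hb1 : 0 < 1 + b := by have := Set.mem_Ioi.1 hb; linarith
  rcases hab.eq_or_lt with rfl | hab
  · exact le_rfl
  show (if b = 0 then condEnt P else condRenyiUp P b) ≤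
    (if a = 0 then condEnt P else condRenyiUp P a)
  rcases lt_trichotomy a 0 with h | h | h
  · rw [if_neg h.ne]
    rcases lt_trichotomy b 0 with h' | h' | h'
    · rw [if_neg h'.ne, hR, hR]
      have h0 := h.ne
      have h0' := h'.ne
      have key := hInterp a b (b * (1 + a) / (a * (1 + b))) ha1 hb1
        (div_pos_of_neg_of_neg (mul_neg_of_neg_of_pos h' ha1) (mul_neg_of_neg_of_pos h hb1))
        (by rw [div_lt_one_of_neg (mul_neg_of_neg_of_pos h hb1)]; nlinarith)
        (by field_simp)
      have := mul_le_mul_of_nonneg_left key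
        (neg_nonneg.2 (div_nonpos_of_nonneg_of_nonpos hb1.le h'.le))
      refine this.trans_eq ?_
      field_simp
    · rw [if_pos h']; exact hlt a ha1 h
    · rw [if_neg h'.ne']; exact (hgt b h').trans (hlt a ha1 h)
  · subst h
    rw [if_pos rfl, if_neg hab.ne']; exact hgt b hab
  · have h' : 0 < b := h.trans hab
    rw [if_neg h.ne', if_neg h'.ne', hR, hR]
    have key := hInterp b a (a * (1 + b) / (b * (1 + a))) hb1 ha1 (by positivity)
      (by rw [div_lt_one (by positivity)]; nlinarith)
      (by field_simp)
    have := mul_le_mul_of_nonneg_left key (by positivity : 0 ≤ (1 + a) / a)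
    have e : (1 + a) / a * (a * (1 + b) / (b * (1 + a)) * log (sumNorm P (1 + b)))
        = (1 + b) / b * log (sumNorm P (1 + b)) := by field_simp
    linarith
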